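/- arXiv:1003.5028 — 4 statements merged into one kernel-verified Lean document; each statement's English description precedes it below -/
import Mathlib

section
/- Let 𝔽_q be a finite field with q elements, let A be an invertible k×k matrix over 𝔽_q whose characteristic polynomial is squarefree (every irreducible factor has multiplicity 1), let α_1, …, α_N be the degrees of the distinct irreducible factors of the characteristic polynomial of A over 𝔽_q, and let Q be the least common multiple of q^{α_1} − 1, …, q^{α_N} − 1. Then A^Q = I; equivalently, every solution of the linear system v_{n+1} = A v_n over 𝔽_q is Q-periodic, i.e. v_{n+Q} = v_n for all n. -/
/-!
By Cayley–Hamilton it is enough that the characteristic polynomial `χ` of `A` divides `X ^ Q - 1`.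
An irreducible `g` of degree `α` over `𝔽_q` divides `X ^ (q ^ α) - X = X * (X ^ (q ^ α - 1) - 1)`.
Since `A` is invertible, `χ` has nonzero constant term, so no irreducible factor `g` of `χ`
divides `X`; hence `g ∣ X ^ (q ^ α - 1) - 1 ∣ X ^ Q - 1`. As `χ` is squarefree, it divides every
polynomial divisible by all of its irreducible factors.
-/

open Polynomial UniqueFactorizationMonoid

/-- An irreducible polynomial other than `X` (up to a unit) divides `X ^ (q ^ α - 1) - 1`, where
`α` is its degree: its roots are nonzero elements of the field with `q ^ α` elements. -/
theorem irreducible_dvd_X_pow_sub_one {F : Type*} [Field F] [Fintype F] {g : F[X]}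
    (hg : Irreducible g) (hX : ¬ g ∣ X) :
    g ∣ X ^ (Fintype.card F ^ g.natDegree - 1) - 1 := by
  have h : g ∣ X ^ Nat.card F ^ g.natDegree - X :=
    hg.natDegree_dvd_iff_dvd_X_pow_card_pow_sub_X.mp dvd_rfl
  rw [Nat.card_eq_fintype_card] at h
  have hpos : 0 < Fintype.card F ^ g.natDegree := pow_pos Fintype.card_pos _
  have hfac : (X : F[X]) ^ Fintype.card F ^ g.natDegree - X
      = X * (X ^ (Fintype.card F ^ g.natDegree - 1) - 1) := by
    rw [mul_sub, mul_one, mul_pow_sub_one hpos.ne']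
  rw [hfac] at h
  exact (hg.prime.dvd_or_dvd h).resolve_left hX

/-- A squarefree polynomial divides everything that its normalized irreducible factors divide. -/
theorem squarefree_dvd_of_factors_dvd {F : Type*} [Field F] [DecidableEq F] {f h : F[X]}
    (hf : Squarefree f) (H : ∀ g ∈ normalizedFactors f, g ∣ h) : f ∣ h := by
  rcases eq_or_ne h 0 with rfl | h0
  · exact dvd_zero f
  have f0 : f ≠ 0 := hf.ne_zero
  rw [dvd_iff_normalizedFactors_le_normalizedFactors f0 h0,
    Multiset.le_iff_subset ((squarefree_iff_nodup_normalizedFactors f0).mp hf)]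
  intro g hg
  exact (mem_normalizedFactors_iff' h0).mpr
    ⟨irreducible_of_normalized_factor g hg, normalize_normalized_factor g hg, H g hg⟩

/-- The constant term of the characteristic polynomial of an invertible matrix is `± det A ≠ 0`. -/
theorem not_X_dvd_charpoly {F : Type*} [Field F] {k : ℕ} {A : Matrix (Fin k) (Fin k) F}
    (hA : IsUnit A) : ¬ X ∣ A.charpoly := by
  intro h
  rw [X_dvd_iff] at h
  have hdet := (Matrix.isUnit_iff_isUnit_det A).mp hA
  rw [Matrix.det_eq_sign_charpoly_coeff, h, mul_zero] at hdet
  exact not_isUnit_zero hdet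

/-- Let `F = 𝔽_q` be a finite field with `q` elements, `A` an invertible `k × k`
matrix over `F` whose characteristic polynomial is squarefree, and let `Q` be the least common
multiple of the numbers `q ^ α - 1` as `α` ranges over the degrees of the distinct irreducible
factors of the characteristic polynomial of `A`.  Then `A ^ Q = 1`; equivalently, every solution of
`v_{n+1} = A v_n` over `F` is `Q`-periodic. -/
theorem stmt3 (F : Type*) [Field F] [Fintype F] (k : ℕ) [DecidableEq F]
    (A : Matrix (Fin k) (Fin k) F) (hA : IsUnit A)
    (hsq : Squarefree (Matrix.charpoly A))
    (Q : ℕ)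
    (hQ : Q = ((normalizedFactors (Matrix.charpoly A)).toFinset.image
        Polynomial.natDegree).lcm (fun α => Fintype.card F ^ α - 1)) :
    A ^ Q = 1 ∧
      ∀ v : ℕ → (Fin k → F), (∀ n, v (n + 1) = A.mulVec (v n)) →
        ∀ n, v (n + Q) = v n := by
  have hdvd : A.charpoly ∣ X ^ Q - 1 := by
    refine squarefree_dvd_of_factors_dvd hsq fun g hg => ?_
    have hirr := irreducible_of_normalized_factor g hg
    have hgX : ¬ g ∣ X := fun h =>
      not_X_dvd_charpoly hA
        (((hirr.associated_of_dvd irreducible_X h).symm.dvd).trans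
          (dvd_of_mem_normalizedFactors hg))
    have hdiv : Fintype.card F ^ g.natDegree - 1 ∣ Q := by
      rw [hQ]
      exact Finset.dvd_lcm (f := fun α => Fintype.card F ^ α - 1)
        (Finset.mem_image_of_mem _ (Multiset.mem_toFinset.mpr hg))
    exact (irreducible_dvd_X_pow_sub_one hirr hgX).trans (by
      obtain ⟨m, rfl⟩ := hdiv
      simpa [pow_mul] using sub_dvd_pow_sub_pow ((X : F[X]) ^ (Fintype.card F ^ g.natDegree - 1)) 1 m)
  have hpow : A ^ Q = 1 := by
    obtain ⟨c, hc⟩ := hdvd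
    have h := congrArg (aeval A) hc
    rw [map_mul, Matrix.aeval_self_charpoly, zero_mul] at h
    simpa [sub_eq_zero] using h
  refine ⟨hpow, fun v hv n => ?_⟩
  have key : ∀ m, v (n + m) = (A ^ m).mulVec (v n) := by
    intro m
    induction m with
    | zero => simp
    | succ m ih => rw [← add_assoc, hv, ih, Matrix.mulVec_mulVec, pow_succ']
  rw [key, hpow, Matrix.one_mulVec]
end

section
/- Let p be a prime and define the integer sequence (a_n) by a_k = k for k = 0, 1, …, p−1 and a_n = a_{n−1} + a_{n−p} for n ≥ p. Then a_{n+p²−1} ≡ a_n (mod p) for all n; that is, the sequence (a_n mod p) is periodic with period p² − 1. -/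
/-!
Modulo `p` the sequence is annihilated by `f = X ^ p - X ^ (p - 1) - 1`, acting through the shift
operator, so it suffices that `f` divides `X ^ (p ^ 2 - 1) - 1` over `ZMod p`. Put
`u = X ^ (p - 1)`. Then `f = u * (X - 1) - 1`, and Frobenius gives
`f ^ p = u ^ p * (X ^ p - 1) - 1`. Modulo `f` we have `X ^ p - 1 = u`, so
`u ^ (p + 1) = X ^ (p ^ 2 - 1)` is congruent to `1`.
-/

open Polynomial in
lemma charpoly_dvd (p : ℕ) (hp : p.Prime) :
    (X ^ p - X ^ (p - 1) - 1 : (ZMod p)[X]) ∣ X ^ (p ^ 2 - 1) - 1 := by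
  have : Fact p.Prime := ⟨hp⟩
  have hpos := hp.pos
  have hu : (X ^ (p - 1) : (ZMod p)[X]) * X = X ^ p := by
    rw [← pow_succ, Nat.sub_add_cancel hpos]
  have hexp : (X ^ (p ^ 2 - 1) : (ZMod p)[X]) = (X ^ (p - 1)) ^ p * X ^ (p - 1) := by
    rw [← pow_succ, ← pow_mul]
    congr 1
    rw [mul_comm, ← Nat.sq_sub_sq p 1, one_pow]
  rw [hexp]
  set u : (ZMod p)[X] := X ^ (p - 1)
  have hfrob : (X ^ p - u - 1) ^ p = u ^ p * (X ^ p - 1) - 1 := by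
    have hf : X ^ p - u - 1 = u * (X - 1) - 1 := by rw [mul_sub, hu, mul_one]
    rw [hf, sub_pow_char, mul_pow, sub_pow_char, one_pow]
  have hself : X ^ p - u - 1 ∣ (X ^ p - u - 1) ^ p := dvd_pow_self _ hp.ne_zero
  have hsplit : u ^ p * u - 1 = (X ^ p - u - 1) ^ p - (X ^ p - u - 1) * u ^ p := by
    rw [hfrob]; ring
  rw [hsplit]
  exact dvd_sub hself (dvd_mul_right _ _)

lemma shift_pow_apply {R : Type*} [CommRing R] (b : ℕ → R) (k n : ℕ) :
    ((LinearMap.funLeft R R Nat.succ) ^ k) b n = b (n + k) := by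
  induction k generalizing n with
  | zero => simp
  | succ k ih =>
    rw [pow_succ', Module.End.mul_apply, LinearMap.funLeft_apply, ih]
    congr 1
    omega

/-- Let `p` be a prime and let `(a_n)` be the integer sequence with `a_k = k`
for `0 ≤ k ≤ p - 1` and `a_n = a_{n-1} + a_{n-p}` for `n ≥ p`.  Then
`a_{n + p² - 1} ≡ a_n (mod p)` for all `n`; i.e. `(a_n mod p)` is `(p² - 1)`-periodic. -/
theorem stmt9 (p : ℕ) (hp : p.Prime) (a : ℕ → ℤ)
    (h0 : ∀ k < p, a k = k)
    (hrec : ∀ n, p ≤ n → a n = a (n - 1) + a (n - p)) :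
    ∀ n : ℕ, a (n + (p ^ 2 - 1)) ≡ a n [ZMOD p] := by
  intro n
  rw [← ZMod.intCast_eq_intCast_iff]
  let b : ℕ → ZMod p := fun n => (a n : ZMod p)
  let S := LinearMap.funLeft (ZMod p) (ZMod p) Nat.succ
  have hann : Polynomial.aeval S (.X ^ p - .X ^ (p - 1) - 1 : Polynomial (ZMod p)) b = 0 := by
    funext m
    have hpos := hp.pos
    have h := hrec (m + p) (by omega)
    rw [Nat.add_sub_cancel, Nat.add_sub_assoc hpos] at h
    simp [S, shift_pow_apply, b, h]
  obtain ⟨g, hg⟩ := charpoly_dvd p hp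
  have hper : Polynomial.aeval S (.X ^ (p ^ 2 - 1) - 1 : Polynomial (ZMod p)) b = 0 := by
    rw [hg, mul_comm, map_mul, Module.End.mul_apply, hann, map_zero]
  have h := congrFun hper n
  simpa [S, shift_pow_apply, b, sub_eq_zero] using h
end

section
/- Let p be a prime and define the integer sequence (a_n) by a_k = k for k = 0, 1, …, p−1 and a_n = a_{n−1} + a_{n−p} for n ≥ p. Then the sequence (a_n), viewed in the field ℚ_p of p-adic numbers, does not converge. -/
open Filter

/-!
A limit `L` would satisfy `L = L + L` by the recurrence, so `L = 0` and `p ∣ a n` for all large `n`.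
The recurrence read backwards, `a n = a (n + p) - a (n + p - 1)`, propagates this divisibility down
to every index, which contradicts `a 1 = 1`.
-/

/-- Let `p` be a prime and let `(a_n)` be the integer sequence with `a_k = k`
for `0 ≤ k ≤ p - 1` and `a_n = a_{n-1} + a_{n-p}` for `n ≥ p`.  Then the sequence `(a_n)`, viewed
in `ℚ_[p]`, does not converge. -/
theorem stmt10 (p : ℕ) [Fact p.Prime] (a : ℕ → ℤ)
    (h0 : ∀ k < p, a k = k)
    (hrec : ∀ n, p ≤ n → a n = a (n - 1) + a (n - p)) :
    ¬ ∃ L : ℚ_[p], Tendsto (fun n : ℕ => ((a n : ℤ) : ℚ_[p])) atTop (nhds L) := by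
  rintro ⟨L, hL⟩
  have hp : p.Prime := Fact.out
  have hp2 := hp.two_le
  have hLL : L = L + L := by
    have hsum : Tendsto (fun n : ℕ => ((a n : ℤ) : ℚ_[p])) atTop (nhds (L + L)) := by
      refine ((hL.comp (tendsto_sub_atTop_nat 1)).add
        (hL.comp (tendsto_sub_atTop_nat p))).congr' ?_
      filter_upwards [eventually_ge_atTop p] with n hn
      simp [hrec n hn]
    exact tendsto_nhds_unique hL hsum
  have hzero : L = 0 := by simpa using hLL
  subst hzero
  obtain ⟨N, hN⟩ : ∃ N, ∀ n ≥ N, (p : ℤ) ∣ a n := by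
    have hnorm := hL.norm
    rw [norm_zero] at hnorm
    obtain ⟨N, hN⟩ := eventually_atTop.1 (hnorm.eventually_lt_const one_pos)
    exact ⟨N, fun n hn => Padic.norm_intCast_lt_one_iff.1 (hN n hn)⟩
  have hall : ∀ n, (p : ℤ) ∣ a n := by
    induction N with
    | zero => exact fun n => hN n n.zero_le
    | succ N ih =>
      refine ih fun n hn => ?_
      have h := hrec (n + p) (by omega)
      rw [Nat.add_sub_cancel] at h
      rw [show a n = a (n + p) - a (n + p - 1) by omega]
      exact dvd_sub (hN _ (by omega)) (hN _ (by omega))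
  have h1 := hall 1
  rw [h0 1 (by omega)] at h1
  have h1' : p ∣ 1 := by exact_mod_cast h1
  exact hp.one_lt.ne' (Nat.dvd_one.1 h1')
end

section
/- Let 𝔽_q be a finite field with q elements and suppose the polynomial X² − X − 1 is irreducible over 𝔽_q. Then every sequence (x_n) with values in 𝔽_q satisfying the Fibonacci recurrence x_{n+2} = x_{n+1} + x_n for all n ≥ 0 is (q² − 1)-periodic, i.e. x_{n+q²−1} = x_n for all n ≥ 0. -/
open Polynomial

/-!
Let `P = X² - X - 1` and `q = |F|`. Since `P` is irreducible of degree two, `F[X]/(P)` is a field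
with `q²` elements in which the class of `X` is nonzero, so `P ∣ X ^ (q² - 1) - 1`
(`fib_charpoly_dvd`). A Fibonacci sequence is annihilated by `P(S)`, where `S` is the left shift
on sequences, hence also by `S ^ (q² - 1) - 1`, which is the claimed periodicity.
-/

/-- The left shift `x ↦ (n ↦ x (n + 1))` on sequences with values in `F`. -/
def seqShift (F : Type*) [Field F] : Module.End F (ℕ → F) :=
  LinearMap.funLeft F F Nat.succ

theorem seqShift_pow_apply (F : Type*) [Field F] (k n : ℕ) (x : ℕ → F) :
    (seqShift F ^ k) x n = x (n + k) := by
  induction k generalizing n with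
  | zero => simp
  | succ k ih =>
    rw [pow_succ', Module.End.mul_apply]
    change (seqShift F ^ k) x (n + 1) = _
    rw [ih]
    congr 1
    omega

/-- Lagrange's theorem in the unit group of the field `F[X]/(X² - X - 1)` of order `q²`. -/
theorem fib_charpoly_dvd (F : Type*) [Field F] [Fintype F]
    (hirr : Irreducible (X ^ 2 - X - 1 : F[X])) :
    (X ^ 2 - X - 1 : F[X]) ∣ X ^ (Fintype.card F ^ 2 - 1) - 1 := by
  have : Fact (Irreducible (X ^ 2 - X - 1 : F[X])) := ⟨hirr⟩
  have hdeg : (X ^ 2 - X - 1 : F[X]).natDegree = 2 := by compute_degree!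
  let pb := AdjoinRoot.powerBasis hirr.ne_zero
  have : Module.Finite F (AdjoinRoot (X ^ 2 - X - 1 : F[X])) := pb.finite
  have : Finite (AdjoinRoot (X ^ 2 - X - 1 : F[X])) := Module.finite_of_finite F
  have := Fintype.ofFinite (AdjoinRoot (X ^ 2 - X - 1 : F[X]))
  have hcard : Fintype.card (AdjoinRoot (X ^ 2 - X - 1 : F[X])) = Fintype.card F ^ 2 := by
    rw [Module.card_eq_pow_finrank (K := F), pb.finrank, AdjoinRoot.powerBasis_dim, hdeg]
  have hroot : (AdjoinRoot.root (X ^ 2 - X - 1 : F[X])) ^ 2 - AdjoinRoot.root _ - 1 = 0 := by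
    have h := AdjoinRoot.mk_self (f := (X ^ 2 - X - 1 : F[X]))
    rwa [map_sub, map_sub, map_pow, AdjoinRoot.mk_X, map_one] at h
  have hne : AdjoinRoot.root (X ^ 2 - X - 1 : F[X]) ≠ 0 := by
    intro h
    rw [h] at hroot
    simp at hroot
  have hpow := FiniteField.pow_card_sub_one_eq_one _ hne
  rw [hcard] at hpow
  rw [← AdjoinRoot.mk_eq_zero]
  simp [hpow]

/-- Let `F = 𝔽_q` be a finite field with `q` elements over which `X² - X - 1`
is irreducible.  Then every sequence with values in `F` satisfying the Fibonacci recurrence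
`x_{n+2} = x_{n+1} + x_n` is `(q² - 1)`-periodic. -/
theorem stmt16 (F : Type*) [Field F] [Fintype F]
    (hirr : Irreducible (X ^ 2 - X - 1 : F[X])) :
    ∀ x : ℕ → F, (∀ n, x (n + 2) = x (n + 1) + x n) →
      ∀ n, x (n + (Fintype.card F ^ 2 - 1)) = x n := by
  intro x hx n
  obtain ⟨c, hc⟩ := fib_charpoly_dvd F hirr
  have hP : aeval (seqShift F) (X ^ 2 - X - 1 : F[X]) x = 0 := by
    ext m
    have h1 := seqShift_pow_apply F 1 m x
    rw [pow_one] at h1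
    simp [seqShift_pow_apply, h1, hx]
  have h : aeval (seqShift F) (X ^ (Fintype.card F ^ 2 - 1) - 1 : F[X]) x = 0 := by
    rw [hc, mul_comm, map_mul, Module.End.mul_apply, hP, map_zero]
  have h2 := congrFun h n
  simpa [seqShift_pow_apply, sub_eq_zero] using h2
end
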